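/- arXiv:2408.10109 — 2 statements merged into one kernel-verified Lean document; each statement's English description precedes it below -/
import Mathlib

section
/- Let Q ∈ ℝ^{m×r} and ω ≥ 0 satisfy ‖I − QᵀQ‖ ≤ ω, and let X ∈ ℝ^{m×s}. Define Ṽ = (I − QQᵀ)X. Then ṼᵀQ(I − QᵀQ)QᵀṼ = XᵀQ(I − QᵀQ)³QᵀX, and ‖ṼᵀQ(I − QᵀQ)QᵀṼ‖ ≤ (1+ω)²·ω³·‖X‖². -/
open scoped Matrix

/-- The spectral norm (`ℓ²→ℓ²` operator norm) of a real matrix. -/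
noncomputable def specNorm {m n : Type*} [Fintype m] [Fintype n] [DecidableEq n]
    (A : Matrix m n ℝ) : ℝ :=
  ‖LinearMap.toContinuousLinearMap (Matrix.toEuclideanLin A)‖

/-- The smallest singular value of a real matrix: the infimum of `‖A x‖₂` over
unit vectors `x`. -/
noncomputable def sigmaMin {m n : Type*} [Fintype m] [Fintype n] [DecidableEq n]
    (A : Matrix m n ℝ) : ℝ :=
  sInf ((fun x : EuclideanSpace ℝ n => ‖Matrix.toEuclideanLin A x‖) ''
    {x : EuclideanSpace ℝ n | ‖x‖ = 1})

/-- The 2-norm condition number `κ(A) = ‖A‖ / σ_min(A)`. -/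
noncomputable def condNum {m n : Type*} [Fintype m] [Fintype n] [DecidableEq n]
    (A : Matrix m n ℝ) : ℝ :=
  specNorm A / sigmaMin A

/-!
Put `E = 1 - Qᴴ Q` and `V = (1 - Q Qᴴ) X`. Since `Qᴴ` intertwines `1 - Q Qᴴ` with `E`, we have
`Qᴴ V = E Qᴴ X`, so `Vᴴ Q E Qᴴ V` is the conjugate `(E Qᴴ X)ᴴ E (E Qᴴ X)` of `E`. As `E` is
self-adjoint this is `Xᴴ Q E³ Qᴴ X`, and its norm is at most `‖E‖ ‖E Qᴴ X‖² ≤ ‖E‖³ ‖Q‖² ‖X‖²`.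
Finally `‖Q‖² = ‖Qᴴ Q‖ = ‖1 - E‖ ≤ 1 + ‖E‖`.
-/

section Algebra

variable {R k l m n : Type*}

theorem isHermitian_one_sub_conjTranspose_mul_self [Ring R] [StarRing R] [Fintype m]
    [DecidableEq n] (Q : Matrix m n R) : (1 - Qᴴ * Q).IsHermitian :=
  Matrix.isHermitian_one.sub (Matrix.isHermitian_conjTranspose_mul_self Q)

theorem conjTranspose_conjTranspose_mul_mul [NonUnitalSemiring R] [StarRing R] [Fintype m]
    [Fintype n] (Q : Matrix m n R) (A : Matrix m l R) (B : Matrix n k R) :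
    (Qᴴ * A)ᴴ * B = Aᴴ * (Q * B) := by
  rw [Matrix.conjTranspose_mul, Matrix.conjTranspose_conjTranspose, Matrix.mul_assoc]

variable [Ring R] [Fintype m] [Fintype n] [DecidableEq m] [DecidableEq n]

theorem mul_one_sub_mul_eq_one_sub_mul_mul (A : Matrix n m R) (B : Matrix m n R) :
    A * (1 - B * A) = (1 - A * B) * A := by
  rw [Matrix.mul_sub, Matrix.sub_mul, Matrix.mul_one, Matrix.one_mul, Matrix.mul_assoc]

variable [StarRing R]

theorem conjTranspose_mul_one_sub_mul_conjTranspose_mul (Q : Matrix m n R) (X : Matrix m l R) :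
    Qᴴ * ((1 - Q * Qᴴ) * X) = (1 - Qᴴ * Q) * (Qᴴ * X) := by
  rw [← Matrix.mul_assoc, mul_one_sub_mul_eq_one_sub_mul_mul, Matrix.mul_assoc]

theorem conjTranspose_one_sub_mul_mul_one_sub_mul_eq_cube (Q : Matrix m n R) (X : Matrix m l R) :
    ((1 - Q * Qᴴ) * X)ᴴ * (Q * ((1 - Qᴴ * Q) * (Qᴴ * ((1 - Q * Qᴴ) * X)))) =
      Xᴴ * (Q * ((1 - Qᴴ * Q) ^ 3 * (Qᴴ * X))) := by
  have h_intertwine := conjTranspose_mul_one_sub_mul_conjTranspose_mul Q X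
  have hE : (1 - Qᴴ * Q)ᴴ = 1 - Qᴴ * Q := isHermitian_one_sub_conjTranspose_mul_self Q
  rw [← conjTranspose_conjTranspose_mul_mul, h_intertwine]
  set E := 1 - Qᴴ * Q
  calc (E * (Qᴴ * X))ᴴ * (E * (E * (Qᴴ * X)))
      = (Qᴴ * X)ᴴ * (E * (E * (E * (Qᴴ * X)))) := by
        rw [Matrix.conjTranspose_mul, hE, Matrix.mul_assoc]
    _ = (Qᴴ * X)ᴴ * (E ^ 3 * (Qᴴ * X)) := by simp only [pow_three, Matrix.mul_assoc]
    _ = Xᴴ * (Q * (E ^ 3 * (Qᴴ * X))) := conjTranspose_conjTranspose_mul_mul Q X _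

end Algebra

section Norm

open scoped Matrix.Norms.L2Operator

variable {𝕜 l m n : Type*} [RCLike 𝕜] [Fintype l] [Fintype m] [Fintype n] [DecidableEq n]

theorem specNorm_eq_l2_opNorm (A : Matrix m n ℝ) : specNorm A = ‖A‖ :=
  rfl

theorem l2_opNorm_one_le : ‖(1 : Matrix n n 𝕜)‖ ≤ 1 := by
  rw [Matrix.cstar_norm_def, map_one]
  exact ContinuousLinearMap.norm_id_le

theorem l2_opNorm_sq_le_one_add_l2_opNorm_one_sub (Q : Matrix m n 𝕜) :
    ‖Q‖ ^ 2 ≤ 1 + ‖1 - Qᴴ * Q‖ :=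
  calc ‖Q‖ ^ 2 = ‖1 - (1 - Qᴴ * Q)‖ := by
        rw [sub_sub_cancel, Matrix.l2_opNorm_conjTranspose_mul_self, sq]
    _ ≤ ‖(1 : Matrix n n 𝕜)‖ + ‖1 - Qᴴ * Q‖ := norm_sub_le _ _
    _ ≤ 1 + ‖1 - Qᴴ * Q‖ := by gcongr; exact l2_opNorm_one_le

variable [DecidableEq m]

theorem l2_opNorm_conjTranspose_mul_mul_le (M : Matrix m m 𝕜) (A : Matrix m n 𝕜) :
    ‖Aᴴ * (M * A)‖ ≤ ‖M‖ * ‖A‖ ^ 2 :=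
  calc ‖Aᴴ * (M * A)‖ ≤ ‖Aᴴ‖ * (‖M‖ * ‖A‖) := by
        grw [Matrix.l2_opNorm_mul, Matrix.l2_opNorm_mul]
    _ = ‖M‖ * ‖A‖ ^ 2 := by rw [Matrix.l2_opNorm_conjTranspose]; ring

variable [DecidableEq l]

theorem l2_opNorm_conjTranspose_mul_one_sub_mul_le (Q : Matrix m n 𝕜) (X : Matrix m l 𝕜) :
    ‖Qᴴ * ((1 - Q * Qᴴ) * X)‖ ≤ ‖1 - Qᴴ * Q‖ * (‖Q‖ * ‖X‖) := by
  rw [conjTranspose_mul_one_sub_mul_conjTranspose_mul]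
  grw [Matrix.l2_opNorm_mul, Matrix.l2_opNorm_mul, Matrix.l2_opNorm_conjTranspose]

theorem stmt_8_general (Q : Matrix m n 𝕜) (X : Matrix m l 𝕜) {ω : ℝ} (hQ : ‖1 - Qᴴ * Q‖ ≤ ω) :
    ((1 - Q * Qᴴ) * X)ᴴ * (Q * ((1 - Qᴴ * Q) * (Qᴴ * ((1 - Q * Qᴴ) * X)))) =
        Xᴴ * (Q * ((1 - Qᴴ * Q) ^ 3 * (Qᴴ * X))) ∧
      ‖((1 - Q * Qᴴ) * X)ᴴ * (Q * ((1 - Qᴴ * Q) * (Qᴴ * ((1 - Q * Qᴴ) * X))))‖ ≤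
        (1 + ω) * ω ^ 3 * ‖X‖ ^ 2 := by
  refine ⟨conjTranspose_one_sub_mul_mul_one_sub_mul_eq_cube Q X, ?_⟩
  have hω : 0 ≤ ω := (norm_nonneg _).trans hQ
  rw [← conjTranspose_conjTranspose_mul_mul]
  set E := 1 - Qᴴ * Q
  set W := Qᴴ * ((1 - Q * Qᴴ) * X)
  calc ‖Wᴴ * (E * W)‖ ≤ ‖E‖ * ‖W‖ ^ 2 := l2_opNorm_conjTranspose_mul_mul_le E W
    _ ≤ ‖E‖ * (‖E‖ * (‖Q‖ * ‖X‖)) ^ 2 := by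
        gcongr; exact l2_opNorm_conjTranspose_mul_one_sub_mul_le Q X
    _ = ‖Q‖ ^ 2 * ‖E‖ ^ 3 * ‖X‖ ^ 2 := by ring
    _ ≤ (1 + ‖E‖) * ‖E‖ ^ 3 * ‖X‖ ^ 2 := by
        gcongr; exact l2_opNorm_sq_le_one_add_l2_opNorm_one_sub Q
    _ ≤ (1 + ω) * ω ^ 3 * ‖X‖ ^ 2 := by gcongr

end Norm

theorem stmt_8 (m r s : ℕ)
    (Q : Matrix (Fin m) (Fin r) ℝ) (ω : ℝ) (hω : 0 ≤ ω)
    (hQ : specNorm (1 - Qᵀ * Q) ≤ ω)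
    (X : Matrix (Fin m) (Fin s) ℝ) :
    (((1 - Q * Qᵀ) * X)ᵀ * (Q * ((1 - Qᵀ * Q) * (Qᵀ * ((1 - Q * Qᵀ) * X)))) =
      Xᵀ * (Q * ((1 - Qᵀ * Q) ^ 3 * (Qᵀ * X)))) ∧
    specNorm (((1 - Q * Qᵀ) * X)ᵀ *
        (Q * ((1 - Qᵀ * Q) * (Qᵀ * ((1 - Q * Qᵀ) * X))))) ≤
      (1 + ω) ^ 2 * ω ^ 3 * specNorm X ^ 2 := by
  -- Over `ℝ`, `ᴴ` is `ᵀ` and `specNorm` is the L2 operator norm, both definitionally.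
  obtain ⟨h_cube, h_norm⟩ := stmt_8_general Q X hQ
  refine ⟨h_cube, h_norm.trans ?_⟩
  rw [specNorm_eq_l2_opNorm]
  gcongr
  exact le_self_pow₀ (le_add_of_nonneg_right hω) two_ne_zero
end

section
/- Let W, ΔW ∈ ℝ^{m×s} with σ_min(W) > 0, let Y ∈ ℝ^{s×s} be nonsingular, and let ΔM ∈ ℝ^{s×s} satisfy YᵀY = WᵀW + ΔM and ‖ΔM‖ < σ_min(W)². Define Q = (W + ΔW)·Y⁻¹. Then ‖I − QᵀQ‖ ≤ (‖ΔM‖ + 2‖W‖·‖ΔW‖ + ‖ΔW‖²) / (σ_min(W)² − ‖ΔM‖). -/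
open scoped Matrix

/-!
From `YᵀY = WᵀW + ΔM` one gets `‖Yx‖² = ‖Wx‖² + ⟪x, ΔM x⟫ ≥ (σ_min(W)² - ‖ΔM‖) ‖x‖²`, so
`‖Y⁻¹‖² ≤ 1 / (σ_min(W)² - ‖ΔM‖)`. On the other hand
`I - QᵀQ = Y⁻ᵀ (YᵀY - (W + ΔW)ᵀ(W + ΔW)) Y⁻¹`, where the middle factor equals `ΔM` up to the
change of the Gram matrix of `W`, which has norm at most `2‖W‖‖ΔW‖ + ‖ΔW‖²`.
-/

section NormedSpace

variable {𝕜 E G : Type*} [NontriviallyNormedField 𝕜]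
  [SeminormedAddCommGroup E] [NormedSpace 𝕜 E]
  [SeminormedAddCommGroup G] [NormedSpace 𝕜 G]

theorem opNorm_sq_le_inv_of_comp_eq_id {Y : E →L[𝕜] G} {Z : G →L[𝕜] E} {c : ℝ} (hc : 0 < c)
    (hY : ∀ x, c * ‖x‖ ^ 2 ≤ ‖Y x‖ ^ 2) (hYZ : Y ∘L Z = .id 𝕜 G) : ‖Z‖ ^ 2 ≤ c⁻¹ := by
  refine (Real.le_sqrt (norm_nonneg Z) (by positivity)).mp ?_
  refine Z.opNorm_le_bound (Real.sqrt_nonneg _) fun z => ?_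
  have hYZz : Y (Z z) = z := DFunLike.congr_fun hYZ z
  have hZz : ‖Z z‖ ^ 2 ≤ c⁻¹ * ‖z‖ ^ 2 := by
    simpa only [hYZz, le_inv_mul_iff₀ hc] using hY (Z z)
  refine le_of_sq_le_sq ?_ (by positivity)
  rwa [mul_pow, Real.sq_sqrt (by positivity)]

end NormedSpace

section HilbertSpace

open ContinuousLinearMap
open scoped InnerProduct

variable {𝕜 E F G : Type*} [RCLike 𝕜]
  [NormedAddCommGroup E] [InnerProductSpace 𝕜 E]
  [NormedAddCommGroup F] [InnerProductSpace 𝕜 F]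
  [NormedAddCommGroup G] [InnerProductSpace 𝕜 G]

theorem neg_opNorm_mul_norm_sq_le_re_inner (T : E →L[𝕜] E) (x : E) :
    -(‖T‖ * ‖x‖ ^ 2) ≤ RCLike.re (inner 𝕜 x (T x)) := by
  refine neg_le_of_abs_le ?_
  calc |RCLike.re (inner 𝕜 x (T x))|
      ≤ ‖x‖ * ‖T x‖ := (RCLike.abs_re_le_norm _).trans (norm_inner_le_norm _ _)
    _ ≤ ‖x‖ * (‖T‖ * ‖x‖) := by gcongr; exact T.le_opNorm x
    _ = ‖T‖ * ‖x‖ ^ 2 := by ring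

variable [CompleteSpace E] [CompleteSpace F] [CompleteSpace G]

theorem norm_sq_lower_bound_of_gram_eq_add {W : E →L[𝕜] F} {Y : E →L[𝕜] G} {ΔM : E →L[𝕜] E}
    {c : ℝ} (hW : ∀ x, c * ‖x‖ ^ 2 ≤ ‖W x‖ ^ 2) (hYY : Y† ∘L Y = W† ∘L W + ΔM) (x : E) :
    (c - ‖ΔM‖) * ‖x‖ ^ 2 ≤ ‖Y x‖ ^ 2 := by
  have hYx : ‖Y x‖ ^ 2 = ‖W x‖ ^ 2 + RCLike.re (inner 𝕜 x (ΔM x)) := by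
    rw [apply_norm_sq_eq_inner_adjoint_right, hYY, add_apply, inner_add_right, map_add,
      ← apply_norm_sq_eq_inner_adjoint_right]
  linarith [hW x, neg_opNorm_mul_norm_sq_le_re_inner ΔM x]

theorem norm_gram_add_sub_gram_le (W ΔW : E →L[𝕜] F) :
    ‖(W + ΔW)† ∘L (W + ΔW) - W† ∘L W‖ ≤ 2 * ‖W‖ * ‖ΔW‖ + ‖ΔW‖ ^ 2 := by
  have norm_adjoint_comp_le (A B : E →L[𝕜] F) : ‖A† ∘L B‖ ≤ ‖A‖ * ‖B‖ := by
    simpa only [LinearIsometryEquiv.norm_map] using opNorm_comp_le (A†) B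
  calc ‖(W + ΔW)† ∘L (W + ΔW) - W† ∘L W‖
      = ‖W† ∘L ΔW + ΔW† ∘L W + ΔW† ∘L ΔW‖ := by
        rw [map_add, add_comp, comp_add, comp_add]
        congr 1
        abel
    _ ≤ ‖W† ∘L ΔW‖ + ‖ΔW† ∘L W‖ + ‖ΔW† ∘L ΔW‖ := norm_add₃_le
    _ ≤ ‖W‖ * ‖ΔW‖ + ‖ΔW‖ * ‖W‖ + ‖ΔW‖ * ‖ΔW‖ := by gcongr <;> apply norm_adjoint_comp_le
    _ = 2 * ‖W‖ * ‖ΔW‖ + ‖ΔW‖ ^ 2 := by ring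

theorem id_sub_gram_comp_eq (A : E →L[𝕜] F) {Y : E →L[𝕜] G} {Z : G →L[𝕜] E}
    (hYZ : Y ∘L Z = .id 𝕜 G) :
    .id 𝕜 G - (A ∘L Z)† ∘L (A ∘L Z) = Z† ∘L (Y† ∘L Y - A† ∘L A) ∘L Z := by
  have hid : .id 𝕜 G = (Y ∘L Z)† ∘L (Y ∘L Z) := by rw [hYZ, adjoint_id, id_comp]
  rw [hid, adjoint_comp, adjoint_comp, sub_comp, comp_sub]
  simp only [comp_assoc]

theorem norm_id_sub_gram_comp_le (A : E →L[𝕜] F) {Y : E →L[𝕜] G} {Z : G →L[𝕜] E}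
    (hYZ : Y ∘L Z = .id 𝕜 G) :
    ‖.id 𝕜 G - (A ∘L Z)† ∘L (A ∘L Z)‖ ≤ ‖Y† ∘L Y - A† ∘L A‖ * ‖Z‖ ^ 2 := by
  rw [id_sub_gram_comp_eq A hYZ]
  calc ‖Z† ∘L (Y† ∘L Y - A† ∘L A) ∘L Z‖
      ≤ ‖Z†‖ * (‖Y† ∘L Y - A† ∘L A‖ * ‖Z‖) := by
        grw [opNorm_comp_le, opNorm_comp_le]
    _ = ‖Y† ∘L Y - A† ∘L A‖ * ‖Z‖ ^ 2 := by
        rw [LinearIsometryEquiv.norm_map]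
        ring

theorem norm_id_sub_gram_comp_le_of_gram_eq_add {W : E →L[𝕜] F} (ΔW : E →L[𝕜] F)
    {Y : E →L[𝕜] G} {Z : G →L[𝕜] E} {ΔM : E →L[𝕜] E} (hYZ : Y ∘L Z = .id 𝕜 G)
    (hYY : Y† ∘L Y = W† ∘L W + ΔM) :
    ‖.id 𝕜 G - ((W + ΔW) ∘L Z)† ∘L ((W + ΔW) ∘L Z)‖ ≤
      (‖ΔM‖ + 2 * ‖W‖ * ‖ΔW‖ + ‖ΔW‖ ^ 2) * ‖Z‖ ^ 2 := by
  grw [norm_id_sub_gram_comp_le (W + ΔW) hYZ]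
  gcongr
  calc ‖Y† ∘L Y - (W + ΔW)† ∘L (W + ΔW)‖
      = ‖ΔM - ((W + ΔW)† ∘L (W + ΔW) - W† ∘L W)‖ := by
        rw [hYY]
        congr 1
        abel
    _ ≤ ‖ΔM‖ + ‖(W + ΔW)† ∘L (W + ΔW) - W† ∘L W‖ := norm_sub_le _ _
    _ ≤ ‖ΔM‖ + 2 * ‖W‖ * ‖ΔW‖ + ‖ΔW‖ ^ 2 := by
        linarith [norm_gram_add_sub_gram_le W ΔW]

theorem stmt_12_general {W ΔW : E →L[𝕜] F} {Y : E →L[𝕜] G} {Z : G →L[𝕜] E} {ΔM : E →L[𝕜] E}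
    {c : ℝ} (hW : ∀ x, c * ‖x‖ ^ 2 ≤ ‖W x‖ ^ 2) (hYZ : Y ∘L Z = .id 𝕜 G)
    (hYY : Y† ∘L Y = W† ∘L W + ΔM) (hΔM : ‖ΔM‖ < c) :
    ‖.id 𝕜 G - ((W + ΔW) ∘L Z)† ∘L ((W + ΔW) ∘L Z)‖ ≤
      (‖ΔM‖ + 2 * ‖W‖ * ‖ΔW‖ + ‖ΔW‖ ^ 2) / (c - ‖ΔM‖) := by
  have hZ : ‖Z‖ ^ 2 ≤ (c - ‖ΔM‖)⁻¹ :=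
    opNorm_sq_le_inv_of_comp_eq_id (sub_pos.mpr hΔM) (norm_sq_lower_bound_of_gram_eq_add hW hYY)
      hYZ
  grw [norm_id_sub_gram_comp_le_of_gram_eq_add ΔW hYZ hYY, hZ, div_eq_mul_inv]

end HilbertSpace

section EuclideanOperator

open scoped InnerProduct

variable {𝕜 l m n : Type*} [RCLike 𝕜] [Fintype l] [Fintype m] [Fintype n]
  [DecidableEq m] [DecidableEq n]

/-- The bounded operator between Euclidean spaces given by a rectangular matrix, as a linear
equivalence. Its operator norm on real matrices is `specNorm`; the square case is
`Matrix.toEuclideanCLM`. -/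
noncomputable def euclideanOperator :
    Matrix m n 𝕜 ≃ₗ[𝕜] EuclideanSpace 𝕜 n →L[𝕜] EuclideanSpace 𝕜 m :=
  Matrix.toEuclideanLin.trans LinearMap.toContinuousLinearMap

theorem euclideanOperator_one :
    euclideanOperator (1 : Matrix n n 𝕜) = .id 𝕜 (EuclideanSpace 𝕜 n) := by
  ext1 x
  exact LinearMap.congr_fun (Matrix.toLpLin_one 2) x

theorem euclideanOperator_mul (A : Matrix l m 𝕜) (B : Matrix m n 𝕜) :
    euclideanOperator (A * B) = euclideanOperator A ∘L euclideanOperator B := by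
  ext1 x
  exact LinearMap.congr_fun (Matrix.toLpLin_mul_same 2 A B) x

theorem euclideanOperator_comp_nonsing_inv {A : Matrix n n 𝕜} (hA : IsUnit A.det) :
    euclideanOperator A ∘L euclideanOperator A⁻¹ = .id 𝕜 (EuclideanSpace 𝕜 n) := by
  rw [← euclideanOperator_mul, Matrix.mul_nonsing_inv A hA, euclideanOperator_one]

theorem euclideanOperator_conjTranspose (A : Matrix m n 𝕜) :
    euclideanOperator Aᴴ = (euclideanOperator A)† := by
  simp only [euclideanOperator, LinearEquiv.trans_apply,
    Matrix.toEuclideanLin_conjTranspose_eq_adjoint, LinearMap.adjoint_toContinuousLinearMap]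

theorem euclideanOperator_transpose (A : Matrix m n ℝ) :
    euclideanOperator Aᵀ = (euclideanOperator A)† := by
  rw [← Matrix.conjTranspose_eq_transpose_of_trivial, euclideanOperator_conjTranspose]

end EuclideanOperator

section SigmaMin

variable {m n : Type*} [Fintype m] [Fintype n] [DecidableEq n]

theorem specNorm_eq_norm_euclideanOperator (A : Matrix m n ℝ) :
    specNorm A = ‖euclideanOperator A‖ := rfl

theorem sigmaMin_mul_norm_le (A : Matrix m n ℝ) (x : EuclideanSpace ℝ n) :
    sigmaMin A * ‖x‖ ≤ ‖euclideanOperator A x‖ := by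
  obtain rfl | hx := eq_or_ne x 0
  · simp
  have hunit : sigmaMin A ≤ ‖euclideanOperator A (‖x‖⁻¹ • x)‖ := by
    refine csInf_le ⟨0, ?_⟩ ⟨‖x‖⁻¹ • x, norm_smul_inv_norm hx, rfl⟩
    rintro _ ⟨y, -, rfl⟩
    exact norm_nonneg _
  rwa [map_smul, norm_smul, norm_inv, norm_norm, le_inv_mul_iff₀' (norm_pos_iff.mpr hx)] at hunit

theorem sigmaMin_nonneg (A : Matrix m n ℝ) : 0 ≤ sigmaMin A := by
  refine Real.sInf_nonneg ?_
  rintro _ ⟨x, -, rfl⟩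
  exact norm_nonneg _

theorem sigmaMin_sq_mul_norm_sq_le (A : Matrix m n ℝ) (x : EuclideanSpace ℝ n) :
    sigmaMin A ^ 2 * ‖x‖ ^ 2 ≤ ‖euclideanOperator A x‖ ^ 2 := by
  have := sigmaMin_nonneg A
  rw [← mul_pow]
  gcongr
  exact sigmaMin_mul_norm_le A x

end SigmaMin

theorem stmt_12 (m s : ℕ)
    (W ΔW : Matrix (Fin m) (Fin s) ℝ) (hW : 0 < sigmaMin W)
    (Y : Matrix (Fin s) (Fin s) ℝ) (hY : IsUnit Y.det)
    (ΔM : Matrix (Fin s) (Fin s) ℝ)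
    (hYY : Yᵀ * Y = Wᵀ * W + ΔM)
    (hΔM : specNorm ΔM < sigmaMin W ^ 2) :
    specNorm (1 - ((W + ΔW) * Y⁻¹)ᵀ * ((W + ΔW) * Y⁻¹)) ≤
      (specNorm ΔM + 2 * specNorm W * specNorm ΔW + specNorm ΔW ^ 2) /
        (sigmaMin W ^ 2 - specNorm ΔM) := by
  have hgram := congrArg euclideanOperator hYY
  simp only [map_add, euclideanOperator_mul, euclideanOperator_transpose] at hgram
  simpa only [specNorm_eq_norm_euclideanOperator, map_sub, map_add, euclideanOperator_one,
    euclideanOperator_mul, euclideanOperator_transpose] using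
    stmt_12_general (ΔW := euclideanOperator ΔW) (sigmaMin_sq_mul_norm_sq_le W)
      (euclideanOperator_comp_nonsing_inv hY) hgram hΔM
end
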